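/- arXiv:2202.08739 — 2 statements merged into one kernel-verified Lean document; each statement's English description precedes it below -/
import Mathlib

section
/- For every n ≥ 1, the signed count of leaf-labeled rooted trees with n labeled leaves, each tree counted with sign (−1)^{number of internal vertices}, equals (−1)^{n+1} (n−1)!, where all internal (non-root, non-leaf) vertices are required to have degree at least 3. -/
/-- A leaf-labeled rooted tree with `n` leaves and `k` internal vertices, with internal
vertices labeled: a tree on the vertex set `Fin n ⊕ Fin k ⊕ Unit` (leaves ⊕ internal
vertices ⊕ root) in which the leaves and the root have degree 1 and all internal
vertices have degree at least 3. -/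
def RootedLeafTree (n k : ℕ) : Type :=
  {G : SimpleGraph (Fin n ⊕ Fin k ⊕ Unit) //
    G.IsTree ∧
    (∀ i : Fin n, (G.neighborSet (Sum.inl i)).ncard = 1) ∧
    (∀ j : Fin k, 3 ≤ (G.neighborSet (Sum.inr (Sum.inl j))).ncard) ∧
    (G.neighborSet (Sum.inr (Sum.inr ()))).ncard = 1}

/-!
Deleting the last leaf of a tree with `n + 1` leaves and `k + 1` internal vertices removes a
pendant edge at an internal vertex, whose degree drops by one. If it is still at least 3, what
remains is a tree with `n` leaves and `k + 1` internal vertices; if it is 2, the internal vertex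
subdivides one of the `n + k` edges of a tree with `n` leaves and `k` internal vertices. So, up to
the labeling of the internal vertices, the numbers `t n k` of such trees satisfy
`t (n + 1) (k + 1) = (k + 1) * t n (k + 1) + (n + k) * t n k`. In the alternating sum over `k` the
terms with coefficient `k` telescope, and passing from `n` to `n + 1` leaves multiplies the sum
by `-n`.
-/

open SimpleGraph

section TreesAndEdges

variable {V W : Type*} {G : SimpleGraph V}

theorem reachable_map_of_forall_adj {H : SimpleGraph W} {f : V → W}
    (hf : ∀ u v, G.Adj u v → H.Reachable (f u) (f v)) {u v : V} (h : G.Reachable u v) :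
    H.Reachable (f u) (f v) := by
  simp only [reachable_iff_reflTransGen] at hf h ⊢
  exact h.lift' f hf

theorem sum_ncard_neighborSet_add_two_of_isTree [Fintype V] (hG : G.IsTree) :
    ∑ v, (G.neighborSet v).ncard + 2 = 2 * Fintype.card V := by
  classical
  have ncard_eq (v : V) : (G.neighborSet v).ncard = G.degree v := by
    rw [Set.ncard_eq_toFinset_card', ← neighborFinset_def, card_neighborFinset_eq_degree]
  rw [← hG.card_edgeFinset, mul_add, ← G.sum_degrees_eq_twice_card_edges]
  simp only [ncard_eq, mul_one]

theorem isTree_iff_eq_top_of_card_eq_two (hV : Nat.card V = 2) : G.IsTree ↔ G = ⊤ := by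
  have : Finite V := Nat.finite_of_card_ne_zero (by omega)
  have : Nontrivial V := Finite.one_lt_card_iff_nontrivial.mp (by omega)
  constructor
  · intro hG
    ext x y
    rw [top_adj]
    refine ⟨Adj.ne, fun hxy => ?_⟩
    obtain ⟨z, hz⟩ := hG.connected.preconnected.exists_adj_of_nontrivial x
    have univ_eq : ({x, y} : Set V) = Set.univ :=
      Set.eq_of_subset_of_ncard_le (Set.subset_univ _) (by simp [Set.ncard_pair hxy, hV])
    obtain rfl | rfl : z ∈ ({x, y} : Set V) := univ_eq ▸ Set.mem_univ z
    · exact (hz.ne rfl).elim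
    · exact hz
  · rintro rfl
    exact ⟨connected_top, .of_card_le_two (by simp [ENat.card_eq_coe_natCard, hV])⟩

end TreesAndEdges

section AddVertex

variable {V : Type*} (H : SimpleGraph V) (S : Set V)

/-- The graph obtained from `H` by adjoining a new vertex, `none`, with neighbour set `S`. -/
def addVertex : SimpleGraph (Option V) where
  Adj
    | some x, some y => H.Adj x y
    | some x, none | none, some x => x ∈ S
    | none, none => False
  symm := ⟨by rintro (_ | x) (_ | y) h <;> first | exact h | exact H.adj_symm h⟩
  loopless := ⟨by rintro (_ | x) h; exacts [h, H.loopless.irrefl x h]⟩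

@[simp] theorem addVertex_adj_some_some {x y : V} :
    (addVertex H S).Adj (some x) (some y) ↔ H.Adj x y := Iff.rfl

@[simp] theorem addVertex_adj_none_some {x : V} :
    (addVertex H S).Adj none (some x) ↔ x ∈ S := Iff.rfl

@[simp] theorem addVertex_adj_some_none {x : V} :
    (addVertex H S).Adj (some x) none ↔ x ∈ S := Iff.rfl

theorem exists_eq_addVertex (G : SimpleGraph (Option V)) : ∃ H S, G = addVertex H S := by
  refine ⟨G.comap some, some ⁻¹' G.neighborSet none, ?_⟩
  ext (_ | x) (_ | y) <;> simp [G.adj_comm]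

variable {H S} in
theorem addVertex_inj {H' : SimpleGraph V} {S' : Set V} :
    addVertex H S = addVertex H' S' ↔ H = H' ∧ S = S' := by
  refine ⟨fun h => ⟨?_, ?_⟩, fun ⟨hH, hS⟩ => hH ▸ hS ▸ rfl⟩
  · ext x y
    rw [← addVertex_adj_some_some H S, h, addVertex_adj_some_some]
  · ext x
    rw [← addVertex_adj_none_some H S, h, addVertex_adj_none_some]

theorem neighborSet_addVertex_none : (addVertex H S).neighborSet none = some '' S := by
  ext (_ | x) <;> simp

variable {S} in
theorem neighborSet_addVertex_some_of_mem {v : V} (hv : v ∈ S) :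
    (addVertex H S).neighborSet (some v) = insert none (some '' H.neighborSet v) := by
  ext (_ | x) <;> simp [hv]

variable {S} in
theorem neighborSet_addVertex_some_of_notMem {v : V} (hv : v ∉ S) :
    (addVertex H S).neighborSet (some v) = some '' H.neighborSet v := by
  ext (_ | x) <;> simp [hv]

theorem ncard_neighborSet_addVertex_none :
    ((addVertex H S).neighborSet none).ncard = S.ncard := by
  rw [neighborSet_addVertex_none, Set.ncard_image_of_injective _ (Option.some_injective V)]

variable {S} in
theorem ncard_neighborSet_addVertex_some_of_mem [Finite V] {v : V} (hv : v ∈ S) :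
    ((addVertex H S).neighborSet (some v)).ncard = (H.neighborSet v).ncard + 1 := by
  rw [neighborSet_addVertex_some_of_mem H hv, Set.ncard_insert_of_notMem (by simp),
    Set.ncard_image_of_injective _ (Option.some_injective V)]

variable {S} in
theorem ncard_neighborSet_addVertex_some_of_notMem {v : V} (hv : v ∉ S) :
    ((addVertex H S).neighborSet (some v)).ncard = (H.neighborSet v).ncard := by
  rw [neighborSet_addVertex_some_of_notMem H hv,
    Set.ncard_image_of_injective _ (Option.some_injective V)]

theorem edgeSet_addVertex : (addVertex H S).edgeSet =
    Sym2.map some '' H.edgeSet ∪ (fun v => s(none, some v)) '' S := by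
  ext e
  induction e with | _ x y
  rcases x with _ | x <;> rcases y with _ | y
  · simp [Sym2.exists]
  · simp [Sym2.exists]
  · simp [Sym2.exists]
  · have mem_image_iff : s(some x, some y) ∈ Sym2.map some '' H.edgeSet ↔ s(x, y) ∈ H.edgeSet :=
      (Sym2.map.injective (Option.some_injective V)).mem_set_image (a := s(x, y))
    simp [mem_image_iff]

theorem card_edgeSet_addVertex [Finite V] :
    Nat.card (addVertex H S).edgeSet = Nat.card H.edgeSet + S.ncard := by
  have disjoint : Disjoint (Sym2.map some '' H.edgeSet) ((fun v => s(none, some v)) '' S) := by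
    rw [Set.disjoint_left]
    rintro _ ⟨e, -, rfl⟩ ⟨v, -, hv⟩
    have : none ∈ Sym2.map some e := hv ▸ Sym2.mem_mk_left none (some v)
    simp at this
  rw [Nat.card_coe_set_eq, Nat.card_coe_set_eq, edgeSet_addVertex, Set.ncard_union_eq disjoint,
    Set.ncard_image_of_injective _ (Sym2.map.injective (Option.some_injective V)),
    Set.ncard_image_of_injective _ fun u v h => by simpa using h]

theorem connected_addVertex_pair (a b : V) :
    (addVertex H {a, b}).Connected ↔ (H ⊔ edge a b).Connected := by
  constructor
  · intro h
    have reachable_ab : (H ⊔ edge a b).Reachable a b := by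
      by_cases hab : a = b
      · rw [hab]
      · exact Adj.reachable (.inr (by simp [edge_adj, hab]))
    have reachable_of_adj (x y : Option V) (hxy : (addVertex H {a, b}).Adj x y) :
        (H ⊔ edge a b).Reachable (x.getD a) (y.getD a) := by
      rcases x with _ | x <;> rcases y with _ | y
      · rfl
      · obtain rfl | rfl := hxy
        exacts [.rfl, reachable_ab]
      · obtain rfl | rfl := hxy
        exacts [.rfl, reachable_ab.symm]
      · exact Adj.reachable (.inl hxy)
    have : Nonempty V := ⟨a⟩
    exact ⟨fun x y => reachable_map_of_forall_adj reachable_of_adj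
      (h.preconnected (some x) (some y))⟩
  · intro h
    have reachable_of_adj (x y : V) (hxy : (H ⊔ edge a b).Adj x y) :
        (addVertex H {a, b}).Reachable (some x) (some y) := by
      rcases hxy with hxy | hxy
      · exact Adj.reachable hxy
      · have hx : (addVertex H {a, b}).Adj (some x) none := by
          grind [addVertex_adj_some_none]
        have hy : (addVertex H {a, b}).Adj none (some y) := by
          grind [addVertex_adj_none_some]
        exact hx.reachable.trans hy.reachable
    rw [connected_iff_exists_forall_reachable]
    refine ⟨some a, ?_⟩
    rintro (_ | x)
    · exact Adj.reachable (by simp)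
    · exact reachable_map_of_forall_adj reachable_of_adj (h.preconnected a x)

theorem isTree_addVertex_singleton [Finite V] (v : V) :
    (addVertex H {v}).IsTree ↔ H.IsTree := by
  have connected_iff := connected_addVertex_pair H v v
  rw [Set.pair_eq_singleton, sup_edge_self] at connected_iff
  rw [isTree_iff_connected_and_card, isTree_iff_connected_and_card, connected_iff,
    card_edgeSet_addVertex, Set.ncard_singleton, Finite.card_option, Nat.add_right_cancel_iff]

variable {H} in
theorem isTree_addVertex_pair [Finite V] {a b : V} (hab : a ≠ b) (hadj : ¬H.Adj a b) :
    (addVertex H {a, b}).IsTree ↔ (H ⊔ edge a b).IsTree := by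
  have card_edgeSet_sup_edge : Nat.card (H ⊔ edge a b).edgeSet = Nat.card H.edgeSet + 1 := by
    rw [edgeSet_sup, edgeSet_edge_of_ne hab, Set.union_singleton, Nat.card_coe_set_eq,
      Set.ncard_insert_of_notMem (mt H.mem_edgeSet.mp hadj), Nat.card_coe_set_eq]
  rw [isTree_iff_connected_and_card, isTree_iff_connected_and_card, connected_addVertex_pair,
    card_edgeSet_addVertex, card_edgeSet_sup_edge, Set.ncard_pair hab, Finite.card_option,
    Nat.add_right_cancel_iff]

variable {H} in
theorem not_adj_of_isAcyclic_addVertex_pair {a b : V}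
    (h : (addVertex H {a, b}).IsAcyclic) : ¬H.Adj a b := by
  classical
  exact fun hadj => h.cliqueFree le_rfl {none, some a, some b}
    (is3Clique_triple_iff.mpr (by simpa using hadj))

end AddVertex

section Subdivide

variable {V : Type*} {H : SimpleGraph V} {e : Sym2 V}

/-- The subdivision of the edge `e` of `H` by a new vertex, `none`. -/
def subdivide (H : SimpleGraph V) (e : Sym2 V) : SimpleGraph (Option V) :=
  addVertex (H.deleteEdges {e}) e

theorem deleteEdges_sup_edge {a b : V} (hab : H.Adj a b) :
    H.deleteEdges {s(a, b)} ⊔ edge a b = H :=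
  sdiff_sup_cancel ((edge_le_iff H).mpr (.inr hab))

theorem isTree_subdivide [Finite V] (he : e ∈ H.edgeSet) :
    (subdivide H e).IsTree ↔ H.IsTree := by
  induction e with | _ a b
  rw [subdivide, Sym2.coe_mk, isTree_addVertex_pair (Adj.ne he) (by simp),
    deleteEdges_sup_edge he]

theorem ncard_neighborSet_subdivide_none (he : e ∈ H.edgeSet) :
    ((subdivide H e).neighborSet none).ncard = 2 := by
  induction e with | _ a b
  rw [subdivide, ncard_neighborSet_addVertex_none, Sym2.coe_mk, Set.ncard_pair (Adj.ne he)]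

theorem ncard_neighborSet_subdivide_some [Finite V] (he : e ∈ H.edgeSet) (v : V) :
    ((subdivide H e).neighborSet (some v)).ncard = (H.neighborSet v).ncard := by
  by_cases hv : v ∈ e
  · obtain ⟨w, rfl⟩ := Sym2.mem_iff_exists.mp hv
    have neighborSet_eq : (H.deleteEdges {s(v, w)}).neighborSet v = H.neighborSet v \ {w} := by
      ext x
      simp only [mem_neighborSet, deleteEdges_adj, Set.mem_singleton_iff, Set.mem_sdiff,
        Sym2.congr_right]
    rw [subdivide, ncard_neighborSet_addVertex_some_of_mem _ hv, neighborSet_eq,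
      Set.ncard_sdiff_singleton_add_one ((H.mem_neighborSet v w).mpr he)]
  · have neighborSet_eq : (H.deleteEdges {e}).neighborSet v = H.neighborSet v := by
      ext x
      have : s(v, x) ≠ e := by rintro rfl; simp at hv
      simp [this]
    rw [subdivide, ncard_neighborSet_addVertex_some_of_notMem _ hv, neighborSet_eq]

theorem subdivide_inj {H' : SimpleGraph V} {e' : Sym2 V} (he : e ∈ H.edgeSet)
    (he' : e' ∈ H'.edgeSet) : subdivide H e = subdivide H' e' ↔ H = H' ∧ e = e' := by
  refine ⟨fun h => ?_, fun ⟨hH, he⟩ => hH ▸ he ▸ rfl⟩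
  obtain ⟨deleteEdges_eq, coe_eq⟩ := addVertex_inj.mp h
  obtain rfl := SetLike.coe_injective coe_eq
  induction e with | _ a b
  refine ⟨?_, rfl⟩
  rw [← deleteEdges_sup_edge he, deleteEdges_eq, deleteEdges_sup_edge he']

theorem exists_eq_subdivide {G : SimpleGraph (Option V)} (hG : G.IsAcyclic)
    (hdeg : (G.neighborSet none).ncard = 2) : ∃ H, ∃ e ∈ H.edgeSet, G = subdivide H e := by
  obtain ⟨H, S, rfl⟩ := exists_eq_addVertex G
  rw [ncard_neighborSet_addVertex_none, Set.ncard_eq_two] at hdeg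
  obtain ⟨a, b, hab, rfl⟩ := hdeg
  have hadj := not_adj_of_isAcyclic_addVertex_pair hG
  refine ⟨H ⊔ edge a b, s(a, b), by simp [hab], ?_⟩
  have deleteEdges_eq : (H ⊔ edge a b).deleteEdges {s(a, b)} = H :=
    Disjoint.sup_sdiff_cancel_right ((disjoint_edge H).mpr hadj)
  rw [subdivide, deleteEdges_eq, Sym2.coe_mk]

end Subdivide

section DegreeTrees

variable {V W : Type*}

/-- The trees on `V` in which the degree of each vertex `v` lies in the prescribed set `D v`. -/
def degreeTrees (D : V → Set ℕ) : Set (SimpleGraph V) :=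
  {G | G.IsTree ∧ ∀ v, (G.neighborSet v).ncard ∈ D v}

theorem comap_mem_degreeTrees (e : V ≃ W) {D : W → Set ℕ} {G : SimpleGraph W} :
    G.comap e ∈ degreeTrees (D ∘ e) ↔ G ∈ degreeTrees D := by
  have ncard_eq (v : V) : ((G.comap e).neighborSet v).ncard = (G.neighborSet (e v)).ncard :=
    Set.ncard_preimage_of_injective_subset_range e.injective
      (e.range_eq_univ ▸ Set.subset_univ _)
  rw [degreeTrees, degreeTrees, Set.mem_ofPred_eq, Set.mem_ofPred_eq,
    (Iso.comap e G).isTree_iff, ← e.forall_congr_right]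
  simp only [ncard_eq, Function.comp_apply]

theorem ncard_degreeTrees_comp (e : V ≃ W) (D : W → Set ℕ) :
    (degreeTrees (D ∘ e)).ncard = (degreeTrees D).ncard := by
  rw [← Nat.card_coe_set_eq, ← Nat.card_coe_set_eq]
  exact (Nat.card_congr (Equiv.subtypeEquiv (Equiv.simpleGraph e.symm)
    fun _ => (comap_mem_degreeTrees e).symm)).symm

theorem degreeTrees_update_union [DecidableEq V] (D : V → Set ℕ) (v : V) (A B : Set ℕ) :
    degreeTrees (Function.update D v (A ∪ B)) =
      degreeTrees (Function.update D v A) ∪ degreeTrees (Function.update D v B) := by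
  ext G
  simp only [degreeTrees, Function.forall_update_iff D fun u s => (G.neighborSet u).ncard ∈ s,
    Set.mem_union, Set.mem_ofPred_eq]
  tauto

theorem ncard_degreeTrees_update_union [Finite V] [DecidableEq V] (D : V → Set ℕ) (v : V)
    {A B : Set ℕ} (hAB : Disjoint A B) :
    (degreeTrees (Function.update D v (A ∪ B))).ncard =
      (degreeTrees (Function.update D v A)).ncard +
        (degreeTrees (Function.update D v B)).ncard := by
  rw [degreeTrees_update_union, Set.ncard_union_eq]
  refine Set.disjoint_left.mpr fun G hA hB => ?_
  have mem_A : (G.neighborSet v).ncard ∈ A := by simpa using hA.2 v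
  have mem_B : (G.neighborSet v).ncard ∈ B := by simpa using hB.2 v
  exact Set.disjoint_left.mp hAB mem_A mem_B

theorem degreeTrees_eq_empty_of_subset_zero [Finite V] [Nontrivial V] {D : V → Set ℕ} {v : V}
    (hv : D v ⊆ {0}) : degreeTrees D = ∅ := by
  refine Set.eq_empty_of_forall_notMem fun G ⟨hG, hdeg⟩ => ?_
  obtain ⟨w, hw⟩ := hG.connected.preconnected.exists_adj_of_nontrivial v
  have ncard_eq_zero : (G.neighborSet v).ncard = 0 := hv (hdeg v)
  rw [Set.ncard_eq_zero] at ncard_eq_zero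
  exact Set.notMem_empty w (ncard_eq_zero ▸ hw)

theorem addVertex_singleton_mem_degreeTrees [Finite V] [DecidableEq V] {D : Option V → Set ℕ}
    (hD : D none = {1}) {H : SimpleGraph V} {v : V} :
    addVertex H {v} ∈ degreeTrees D ↔
      H ∈ degreeTrees (Function.update (D ∘ some) v ((· + 1) ⁻¹' D (some v))) := by
  have ncard_some (u : V) (hu : u ≠ v) :
      ((addVertex H {v}).neighborSet (some u)).ncard = (H.neighborSet u).ncard :=
    ncard_neighborSet_addVertex_some_of_notMem H hu
  have ncard_some_self : ((addVertex H {v}).neighborSet (some v)).ncard =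
      (H.neighborSet v).ncard + 1 := ncard_neighborSet_addVertex_some_of_mem H rfl
  simp only [degreeTrees, Set.mem_ofPred_eq, isTree_addVertex_singleton, Option.forall,
    ncard_neighborSet_addVertex_none, hD, Set.ncard_singleton, Set.mem_singleton, true_and,
    Function.forall_update_iff (D ∘ some) fun u s => (H.neighborSet u).ncard ∈ s]
  refine and_congr_right fun _ => ⟨fun h => ⟨?_, fun u hu => ?_⟩, fun ⟨hv, h⟩ u => ?_⟩
  · simpa [ncard_some_self] using h v
  · simpa [ncard_some u hu] using h u
  · by_cases hu : u = v
    · subst hu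
      simpa [ncard_some_self] using hv
    · simpa [ncard_some u hu] using h u hu

theorem ncard_degreeTrees_of_none_eq_one [Fintype V] [DecidableEq V] {D : Option V → Set ℕ}
    (hD : D none = {1}) :
    (degreeTrees D).ncard =
      ∑ v, (degreeTrees (Function.update (D ∘ some) v ((· + 1) ⁻¹' D (some v)))).ncard := by
  simp only [← Nat.card_coe_set_eq]
  rw [← Nat.card_sigma]
  refine (Nat.card_eq_of_bijective
    (fun p => ⟨addVertex p.2.1 {p.1}, (addVertex_singleton_mem_degreeTrees hD).mpr p.2.2⟩)
    ⟨?_, ?_⟩).symm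
  · rintro ⟨v, H, hH⟩ ⟨v', H', hH'⟩ h
    obtain ⟨rfl, hv⟩ := addVertex_inj.mp (congrArg Subtype.val h)
    obtain rfl := Set.singleton_injective hv
    rfl
  · rintro ⟨G, hG⟩
    obtain ⟨H, S, rfl⟩ := exists_eq_addVertex G
    have ncard_eq_one : S.ncard = 1 := by
      simpa [hD, ncard_neighborSet_addVertex_none] using hG.2 none
    obtain ⟨v, rfl⟩ := Set.ncard_eq_one.mp ncard_eq_one
    exact ⟨⟨v, H, (addVertex_singleton_mem_degreeTrees hD).mp hG⟩, rfl⟩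

theorem subdivide_mem_degreeTrees [Finite V] {D : Option V → Set ℕ} (hD : D none = {2})
    {H : SimpleGraph V} {e : Sym2 V} (he : e ∈ H.edgeSet) :
    subdivide H e ∈ degreeTrees D ↔ H ∈ degreeTrees (D ∘ some) := by
  simp [degreeTrees, isTree_subdivide he, Option.forall, ncard_neighborSet_subdivide_none he, hD,
    ncard_neighborSet_subdivide_some he]

theorem card_sigma_edgeSet_degreeTrees [Fintype V] (D : V → Set ℕ) :
    Nat.card (Σ H : degreeTrees D, H.1.edgeSet) =
      (degreeTrees D).ncard * (Fintype.card V - 1) := by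
  have := Fintype.ofFinite (degreeTrees D)
  have card_edgeSet (H : degreeTrees D) : Nat.card H.1.edgeSet = Fintype.card V - 1 := by
    rw [← Nat.card_eq_fintype_card, ← (isTree_iff_connected_and_card.mp H.2.1).2,
      Nat.add_sub_cancel]
  rw [Nat.card_sigma, Finset.sum_congr rfl fun H _ => card_edgeSet H, Finset.sum_const,
    Finset.card_univ, ← Nat.card_eq_fintype_card, Nat.card_coe_set_eq, smul_eq_mul]

theorem ncard_degreeTrees_of_none_eq_two [Fintype V] {D : Option V → Set ℕ}
    (hD : D none = {2}) :
    (degreeTrees D).ncard = (degreeTrees (D ∘ some)).ncard * (Fintype.card V - 1) := by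
  rw [← card_sigma_edgeSet_degreeTrees, ← Nat.card_coe_set_eq]
  refine (Nat.card_eq_of_bijective
    (fun p => ⟨subdivide p.1.1 p.2.1, (subdivide_mem_degreeTrees hD p.2.2).mpr p.1.2⟩)
    ⟨?_, ?_⟩).symm
  · rintro ⟨⟨H, hH⟩, e, he⟩ ⟨⟨H', hH'⟩, e', he'⟩ h
    obtain ⟨rfl, rfl⟩ := (subdivide_inj he he').mp (congrArg Subtype.val h)
    rfl
  · rintro ⟨G, hG⟩
    obtain ⟨H, e, he, rfl⟩ := exists_eq_subdivide hG.1.isAcyclic (by simpa [hD] using hG.2 none)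
    exact ⟨⟨⟨H, (subdivide_mem_degreeTrees hD he).mp hG⟩, e, he⟩, rfl⟩

end DegreeTrees

section RootedLeafTrees

/-- The vertex degrees allowed in a `RootedLeafTree n k`. -/
def rootedLeafDegrees (n k : ℕ) : Fin n ⊕ Fin k ⊕ Unit → Set ℕ :=
  Sum.elim (fun _ => {1}) (Sum.elim (fun _ => Set.Ici 3) (fun _ => {1}))

variable {n k : ℕ}

theorem rootedLeafDegrees_leaf (i : Fin n) : rootedLeafDegrees n k (.inl i) = {1} := rfl

theorem rootedLeafDegrees_internal (j : Fin k) :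
    rootedLeafDegrees n k (.inr (.inl j)) = Set.Ici 3 := rfl

theorem rootedLeafDegrees_root (r : Unit) : rootedLeafDegrees n k (.inr (.inr r)) = {1} := rfl

theorem card_rootedLeafTree (n k : ℕ) :
    Nat.card (RootedLeafTree n k) = (degreeTrees (rootedLeafDegrees n k)).ncard := by
  rw [← Nat.card_coe_set_eq]
  refine Nat.card_congr (Equiv.subtypeEquivRight fun G => ?_)
  simp only [degreeTrees, Set.mem_ofPred_eq, Sum.forall, rootedLeafDegrees_leaf,
    rootedLeafDegrees_internal, rootedLeafDegrees_root, Set.mem_singleton_iff, Set.mem_Ici,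
    Unique.forall_iff]

theorem card_rootedLeafTree_eq_zero (h : n ≤ k) : Nat.card (RootedLeafTree n k) = 0 := by
  suffices IsEmpty (RootedLeafTree n k) from Nat.card_of_isEmpty
  refine ⟨fun ⟨G, hG, leaf, internal, root⟩ => ?_⟩
  have three_mul_le : k * 3 ≤ ∑ j : Fin k, (G.neighborSet (.inr (.inl j))).ncard := by
    simpa using Finset.card_nsmul_le_sum Finset.univ _ 3 fun j _ => internal j
  have degree_sum := sum_ncard_neighborSet_add_two_of_isTree hG
  simp only [Fintype.sum_sum_type, leaf, root, Finset.sum_const, Finset.card_univ,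
    Fintype.card_sum, Fintype.card_fin, Fintype.card_unit, smul_eq_mul, mul_one] at degree_sum
  omega

theorem card_rootedLeafTree_one_zero : Nat.card (RootedLeafTree 1 0) = 1 := by
  rw [card_rootedLeafTree, Set.ncard_eq_one]
  refine ⟨⊤, ?_⟩
  ext G
  have card_vertices : Nat.card (Fin 1 ⊕ Fin 0 ⊕ Unit) = 2 := by simp
  rw [degreeTrees, Set.mem_ofPred_eq, isTree_iff_eq_top_of_card_eq_two card_vertices,
    Set.mem_singleton_iff, and_iff_left_iff_imp]
  rintro rfl v
  have ncard_eq_one : ((⊤ : SimpleGraph (Fin 1 ⊕ Fin 0 ⊕ Unit)).neighborSet v).ncard = 1 := by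
    rw [neighborSet_top, Set.ncard_compl, card_vertices, Set.ncard_singleton]
  rcases v with _ | v | _
  · exact ncard_eq_one
  · exact v.elim0
  · exact ncard_eq_one

/-- The vertices of a `RootedLeafTree (n + 1) k`, with the last leaf singled out as `none`. -/
def lastLeafEquiv (n k : ℕ) : Option (Fin n ⊕ Fin k ⊕ Unit) ≃ Fin (n + 1) ⊕ Fin k ⊕ Unit where
  toFun o := o.elim (.inl (.last n)) (Sum.map Fin.castSucc id)
  invFun := Sum.elim (Fin.lastCases none fun i => some (.inl i)) fun x => some (.inr x)
  left_inv := by rintro (_ | i | x) <;> simp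
  right_inv := by
    rintro (i | x)
    · cases i using Fin.lastCases <;> simp
    · simp

/-- The vertices of a `RootedLeafTree n (k + 1)`, with the internal vertex `j` singled out as
`none`. -/
def internalVertexEquiv (n : ℕ) (j : Fin (k + 1)) :
    Option (Fin n ⊕ Fin k ⊕ Unit) ≃ Fin n ⊕ Fin (k + 1) ⊕ Unit where
  toFun o := o.elim (.inr (.inl j)) (Sum.map id (Sum.map j.succAbove id))
  invFun := Sum.elim (fun i => some (.inl i)) (Sum.elim
    (j.succAboveCases none fun i => some (.inr (.inl i))) fun r => some (.inr (.inr r)))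
  left_inv := by rintro (_ | i | i | r) <;> simp
  right_inv := by
    rintro (i | i | r)
    · simp
    · cases i using j.succAboveCases <;> simp
    · simp

theorem rootedLeafDegrees_comp_lastLeafEquiv (n k : ℕ) :
    rootedLeafDegrees (n + 1) k ∘ lastLeafEquiv n k ∘ some = rootedLeafDegrees n k := by
  funext v
  rcases v with _ | _ | _ <;> rfl

theorem update_rootedLeafDegrees_comp_internalVertexEquiv (n : ℕ) (j : Fin (k + 1))
    (A : Set ℕ) :
    Function.update (rootedLeafDegrees n (k + 1)) (.inr (.inl j)) A ∘
      internalVertexEquiv n j ∘ some = rootedLeafDegrees n k := by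
  funext v
  have ne : internalVertexEquiv n j (some v) ≠ .inr (.inl j) := fun h =>
    Option.some_ne_none v ((internalVertexEquiv n j).injective h)
  rw [Function.comp_apply, Function.comp_apply, Function.update_of_ne ne]
  rcases v with _ | _ | _ <;> rfl

theorem ncard_degreeTrees_update_two (n : ℕ) (j : Fin (k + 1)) :
    (degreeTrees (Function.update (rootedLeafDegrees n (k + 1)) (.inr (.inl j)) {2})).ncard =
      Nat.card (RootedLeafTree n k) * (n + k) := by
  have none_eq_two : (Function.update (rootedLeafDegrees n (k + 1)) (.inr (.inl j)) {2} ∘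
      internalVertexEquiv n j) none = {2} := Function.update_self _ _ _
  rw [← ncard_degreeTrees_comp (internalVertexEquiv n j),
    ncard_degreeTrees_of_none_eq_two none_eq_two, Function.comp_assoc,
    update_rootedLeafDegrees_comp_internalVertexEquiv, card_rootedLeafTree]
  simp only [Fintype.card_sum, Fintype.card_fin, Fintype.card_unit, ← add_assoc,
    Nat.add_sub_cancel]

theorem ncard_degreeTrees_update_preimage_Ici_three (n : ℕ) (j : Fin (k + 1)) :
    (degreeTrees (Function.update (rootedLeafDegrees n (k + 1)) (.inr (.inl j))
      ((· + 1) ⁻¹' Set.Ici 3))).ncard =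
      Nat.card (RootedLeafTree n (k + 1)) + Nat.card (RootedLeafTree n k) * (n + k) := by
  have preimage_eq : (· + 1) ⁻¹' Set.Ici 3 = Set.Ici 3 ∪ {2} := by
    ext m
    simp only [Set.mem_preimage, Set.mem_Ici, Set.mem_union, Set.mem_singleton_iff]
    omega
  have update_Ici_three : Function.update (rootedLeafDegrees n (k + 1)) (.inr (.inl j))
      (Set.Ici 3) = rootedLeafDegrees n (k + 1) := Function.update_eq_self _ _
  rw [preimage_eq, ncard_degreeTrees_update_union _ _ (by simp), update_Ici_three,
    ncard_degreeTrees_update_two, card_rootedLeafTree n (k + 1)]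

theorem card_rootedLeafTree_succ (hn : 1 ≤ n) (k : ℕ) :
    Nat.card (RootedLeafTree (n + 1) k) =
      ∑ j : Fin k, (degreeTrees (Function.update (rootedLeafDegrees n k) (.inr (.inl j))
        ((· + 1) ⁻¹' Set.Ici 3))).ncard := by
  have : Nontrivial (Fin n ⊕ Fin k ⊕ Unit) := ⟨.inl ⟨0, hn⟩, .inr (.inr ()), by simp⟩
  have no_tree (v : Fin n ⊕ Fin k ⊕ Unit) :
      (degreeTrees (Function.update (rootedLeafDegrees n k) v ((· + 1) ⁻¹' {1}))).ncard = 0 := by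
    rw [degreeTrees_eq_empty_of_subset_zero (v := v) (by simp), Set.ncard_empty]
  have degrees_eq (v : Fin n ⊕ Fin k ⊕ Unit) :
      (rootedLeafDegrees (n + 1) k ∘ lastLeafEquiv n k) (some v) = rootedLeafDegrees n k v :=
    congrFun (rootedLeafDegrees_comp_lastLeafEquiv n k) v
  rw [card_rootedLeafTree, ← ncard_degreeTrees_comp (lastLeafEquiv n k),
    ncard_degreeTrees_of_none_eq_one rfl, Function.comp_assoc,
    rootedLeafDegrees_comp_lastLeafEquiv]
  simp only [degrees_eq, Fintype.sum_sum_type, rootedLeafDegrees_leaf, rootedLeafDegrees_internal,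
    rootedLeafDegrees_root, no_tree, Finset.sum_const_zero, zero_add, add_zero]

theorem card_rootedLeafTree_succ_succ (hn : 1 ≤ n) (k : ℕ) :
    Nat.card (RootedLeafTree (n + 1) (k + 1)) =
      (k + 1) *
        (Nat.card (RootedLeafTree n (k + 1)) + Nat.card (RootedLeafTree n k) * (n + k)) := by
  simp [card_rootedLeafTree_succ hn, ncard_degreeTrees_update_preimage_Ici_three]

theorem card_rootedLeafTree_succ_zero (hn : 1 ≤ n) :
    Nat.card (RootedLeafTree (n + 1) 0) = 0 := by
  simp [card_rootedLeafTree_succ hn]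

end RootedLeafTrees

section SignedCount

theorem sum_neg_one_pow_mul_of_recurrence {R : Type*} [CommRing R] {s t : ℕ → R} {c : R} {n : ℕ}
    (hs : s 0 = 0) (hrec : ∀ k, s (k + 1) = (k + 1) * t (k + 1) + (c + k) * t k)
    (ht : t n = 0) :
    ∑ k ∈ Finset.range (n + 1), (-1) ^ k * s k =
      -c * ∑ k ∈ Finset.range n, (-1) ^ k * t k := by
  have telescoping (k : ℕ) : (-1) ^ (k + 1) * s (k + 1) =
      ((-1) ^ (k + 1) * (k + 1 : ℕ) * t (k + 1) - (-1) ^ k * k * t k) - c * ((-1) ^ k * t k) := by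
    rw [hrec]
    push_cast
    ring
  rw [Finset.sum_range_succ', Finset.sum_congr rfl fun k _ => telescoping k,
    Finset.sum_sub_distrib, Finset.sum_range_sub (fun k : ℕ => (-1) ^ k * (k : R) * t k),
    ← Finset.mul_sum]
  simp [hs, ht]

/-- The number of leaf-labeled rooted trees with `n` leaves and `k` unlabeled internal vertices,
obtained by dividing out the `k!` labelings of the internal vertices. -/
noncomputable def unlabeledCount (n k : ℕ) : ℚ := Nat.card (RootedLeafTree n k) / k.factorial

theorem unlabeledCount_succ_succ {n : ℕ} (hn : 1 ≤ n) (k : ℕ) :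
    unlabeledCount (n + 1) (k + 1) =
      (k + 1) * unlabeledCount n (k + 1) + (n + k) * unlabeledCount n k := by
  simp only [unlabeledCount, card_rootedLeafTree_succ_succ hn, Nat.factorial_succ]
  push_cast
  field_simp

theorem sum_neg_one_pow_mul_unlabeledCount_succ {n : ℕ} (hn : 1 ≤ n) :
    ∑ k ∈ Finset.range (n + 1), (-1) ^ k * unlabeledCount (n + 1) k =
      -n * ∑ k ∈ Finset.range n, (-1) ^ k * unlabeledCount n k :=
  sum_neg_one_pow_mul_of_recurrence
    (by rw [unlabeledCount, card_rootedLeafTree_succ_zero hn, Nat.cast_zero, zero_div])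
    (unlabeledCount_succ_succ hn)
    (by rw [unlabeledCount, card_rootedLeafTree_eq_zero le_rfl, Nat.cast_zero, zero_div])

end SignedCount

/-- For `n ≥ 1`, the signed count of leaf-labeled rooted trees with `n` labeled leaves,
each counted with sign `(-1)^{number of internal vertices}`, equals `(-1)^{n+1} (n-1)!`.
(Internal vertices are unlabeled; since such a tree has no automorphisms fixing the
leaves, this is accounted for by dividing the internally-labeled count by `k!`.) -/
theorem signed_count_rooted_trees (n : ℕ) (hn : 1 ≤ n) :
    ∑ k ∈ Finset.range n,
        ((-1 : ℚ)) ^ k * (Nat.card (RootedLeafTree n k) : ℚ) / (k.factorial : ℚ) =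
      ((-1 : ℚ)) ^ (n + 1) * ((n - 1).factorial : ℚ) := by
  simp only [mul_div_assoc]
  change ∑ k ∈ Finset.range n, (-1) ^ k * unlabeledCount n k = _
  induction n, hn using Nat.le_induction with
  | base => simp [unlabeledCount, card_rootedLeafTree_one_zero]
  | succ n hn ih =>
    have factorial_eq : (n.factorial : ℚ) = n * (n - 1).factorial := by
      exact_mod_cast (Nat.mul_factorial_pred (by omega)).symm
    rw [sum_neg_one_pow_mul_unlabeledCount_succ hn, ih, Nat.add_sub_cancel, factorial_eq]
    ring
end

section
/- For every n ≥ 3, the signed count of leaf-labeled (unrooted) trees with n labeled leaves and all internal vertices of degree at least 3, each tree counted with sign (−1)^{number of internal vertices}, equals (−1)^n (n−2)!. -/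
/-- A leaf-labeled tree with `n` leaves and `k` internal vertices, with internal
vertices labeled: a tree on the vertex set `Fin n ⊕ Fin k` in which the leaves have
degree 1 and all internal vertices have degree at least 3. -/
def LeafTree (n k : ℕ) : Type :=
  {G : SimpleGraph (Fin n ⊕ Fin k) //
    G.IsTree ∧
    (∀ i : Fin n, (G.neighborSet (Sum.inl i)).ncard = 1) ∧
    (∀ j : Fin k, 3 ≤ (G.neighborSet (Sum.inr j)).ncard)}

/-!
Delete one leaf of a tree with `n + 1 ≥ 3` leaves. Its neighbor is internal, and either it keeps
degree at least `3`, or it drops to degree `2` and is suppressed, which leaves a tree with one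
internal vertex less and one of its `n + k - 1` edges marked. With `t n k` the number of trees with
`n` labeled leaves and `k` unlabeled internal vertices, this says
`t (n + 1) (k + 1) = (k + 1) * t n (k + 1) + (n + k - 1) * t n k`. In the signed sum over `k` the
contributions proportional to `k` telescope, so the signed count is multiplied by `-(n - 1)` when
`n` grows by one; it starts from the single edge at `n = 2`.
-/

open Function

section Graph

variable {V W : Type*}

lemma connected_of_reachable_map {G : SimpleGraph V} {H : SimpleGraph W} (f : V → W)
    (hadj : ∀ x y, G.Adj x y → H.Reachable (f x) (f y))
    (hcover : ∀ w, ∃ v, H.Reachable w (f v)) (hG : G.Connected) : H.Connected := by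
  have hmap : ∀ x y, G.Reachable x y → H.Reachable (f x) (f y) := by
    simp only [SimpleGraph.reachable_iff_reflTransGen] at hadj ⊢
    exact Relation.ReflTransGen.lift' f hadj
  have : Nonempty W := hG.nonempty.map f
  refine SimpleGraph.Connected.mk fun x y ↦ ?_
  obtain ⟨a, ha⟩ := hcover x
  obtain ⟨b, hb⟩ := hcover y
  exact ha.trans ((hmap a b (hG.preconnected a b)).trans hb.symm)

lemma sum_ncard_neighborSet [Fintype V] (G : SimpleGraph V) :
    ∑ v, (G.neighborSet v).ncard = 2 * Nat.card G.edgeSet := by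
  classical
  rw [Nat.card_eq_fintype_card, ← SimpleGraph.edgeFinset_card, ← G.sum_degrees_eq_twice_card_edges]
  refine Finset.sum_congr rfl fun v _ ↦ ?_
  rw [Set.ncard_eq_toFinset_card', ← SimpleGraph.neighborFinset,
    SimpleGraph.card_neighborFinset_eq_degree]

lemma isTree_iff_connected_and_sum_ncard_neighborSet [Fintype V] (G : SimpleGraph V) :
    G.IsTree ↔ G.Connected ∧ ∑ v, (G.neighborSet v).ncard + 2 = 2 * Fintype.card V := by
  rw [SimpleGraph.isTree_iff_connected_and_card, sum_ncard_neighborSet,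
    Nat.card_eq_fintype_card (α := V)]
  refine and_congr_right fun _ ↦ ?_
  omega

end Graph

section TreesWithDegrees

variable {V W : Type*}

/-- The trees on the vertex set `V` in which the degree of each vertex `v` lies in `D v`. -/
def treesWithDegrees (D : V → Set ℕ) : Set (SimpleGraph V) :=
  {G | G.IsTree ∧ ∀ v, (G.neighborSet v).ncard ∈ D v}

lemma ncard_treesWithDegrees_comp_equiv (e : V ≃ W) (D : W → Set ℕ) :
    (treesWithDegrees (D ∘ e)).ncard = (treesWithDegrees D).ncard := by
  refine Set.ncard_congr' (e.simpleGraph.subtypeEquiv fun G ↦ ?_)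
  let f : e.simpleGraph G ≃g G := SimpleGraph.Iso.comap e.symm G
  refine and_congr f.isTree_iff.symm ?_
  rw [← e.forall_congr_right]
  refine forall_congr' fun v ↦ ?_
  have hdeg := Set.ncard_congr' (f.mapNeighborSet (e v))
  rw [show f (e v) = v from e.symm_apply_apply v] at hdeg
  rw [hdeg, comp_apply]

lemma mem_treesWithDegrees_update [DecidableEq V] {G : SimpleGraph V} {D : V → Set ℕ} {v : V}
    {A : Set ℕ} :
    G ∈ treesWithDegrees (update D v A) ↔
      G.IsTree ∧ (G.neighborSet v).ncard ∈ A ∧ ∀ w ≠ v, (G.neighborSet w).ncard ∈ D w :=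
  and_congr_right fun _ ↦ forall_update_iff D fun w S ↦ (G.neighborSet w).ncard ∈ S

lemma ncard_treesWithDegrees_update_union [DecidableEq V] [Finite V] (D : V → Set ℕ) (v : V)
    {A B : Set ℕ} (hAB : Disjoint A B) :
    (treesWithDegrees (update D v (A ∪ B))).ncard =
      (treesWithDegrees (update D v A)).ncard + (treesWithDegrees (update D v B)).ncard := by
  rw [← Set.ncard_union_eq]
  · congr 1
    ext G
    simp only [Set.mem_union, mem_treesWithDegrees_update]
    tauto
  · refine Set.disjoint_left.2 fun G hA hB ↦ ?_
    rw [mem_treesWithDegrees_update] at hA hB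
    exact Set.disjoint_left.1 hAB hA.2.1 hB.2.1

lemma treesWithDegrees_eq_empty_of_degree_zero [Nontrivial V] [Finite V] {D : V → Set ℕ} {v : V}
    (hv : D v = {0}) : treesWithDegrees D = ∅ := by
  refine Set.eq_empty_of_forall_notMem fun G ⟨hG, hD⟩ ↦ ?_
  obtain ⟨w, hw⟩ := hG.connected.preconnected.exists_adj_of_nontrivial v
  have hempty : G.neighborSet v = ∅ := by
    rw [← Set.ncard_eq_zero]
    simpa [hv] using hD v
  exact (Set.ext_iff.1 hempty w).1 hw

lemma ncard_treesWithDegrees_of_unique [Unique V] {D : V → Set ℕ} (hD : 0 ∈ D default) :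
    (treesWithDegrees D).ncard = 1 := by
  refine Set.ncard_eq_one.2 ⟨⊥, Set.eq_singleton_iff_unique_mem.2
    ⟨⟨.of_subsingleton, fun v ↦ ?_⟩, fun G _ ↦ Subsingleton.elim G ⊥⟩⟩
  simpa [Unique.eq_default v] using hD

end TreesWithDegrees

section AttachLeaf

variable {W : Type*}

/-- The graph `G` with a new vertex `none` joined to `w` only. -/
def attachLeaf (G : SimpleGraph W) (w : W) : SimpleGraph (Option W) where
  Adj
    | none, none => False
    | none, some y => y = w
    | some x, none => x = w
    | some x, some y => G.Adj x y
  symm := ⟨by rintro (_ | x) (_ | y) h <;> simp_all [G.adj_comm]⟩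
  loopless := ⟨by rintro (_ | x) <;> simp⟩

lemma neighborSet_attachLeaf_none (G : SimpleGraph W) (w : W) :
    (attachLeaf G w).neighborSet none = {some w} := by
  ext (_ | x) <;> simp [attachLeaf]

lemma ncard_neighborSet_attachLeaf_some [DecidableEq W] [Finite W] (G : SimpleGraph W) (w x : W) :
    ((attachLeaf G w).neighborSet (some x)).ncard =
      (G.neighborSet x).ncard + if x = w then 1 else 0 := by
  split_ifs with hx
  · have : (attachLeaf G w).neighborSet (some x) = insert none (some '' G.neighborSet x) := by
      ext (_ | y) <;> simp [attachLeaf, hx]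
    rw [this, Set.ncard_insert_of_notMem (by simp),
      Set.ncard_image_of_injective _ (Option.some_injective _)]
  · have : (attachLeaf G w).neighborSet (some x) = some '' G.neighborSet x := by
      ext (_ | y) <;> simp [attachLeaf, hx]
    rw [this, Set.ncard_image_of_injective _ (Option.some_injective _), add_zero]

lemma attachLeaf_connected_iff {G : SimpleGraph W} {w : W} :
    (attachLeaf G w).Connected ↔ G.Connected := by
  constructor
  · refine connected_of_reachable_map (fun o ↦ o.getD w) ?_ fun x ↦ ⟨some x, .rfl⟩
    rintro (_ | x) (_ | y) h
    · exact .rfl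
    · obtain rfl : y = w := h
      exact .rfl
    · obtain rfl : x = w := h
      exact .rfl
    · exact SimpleGraph.Adj.reachable h
  · refine connected_of_reachable_map some (fun x y h ↦ SimpleGraph.Adj.reachable h) ?_
    rintro (_ | x)
    · exact ⟨w, SimpleGraph.Adj.reachable (show (attachLeaf G w).Adj none (some w) from rfl)⟩
    · exact ⟨x, .rfl⟩

lemma attachLeaf_isTree_iff [Finite W] {G : SimpleGraph W} {w : W} :
    (attachLeaf G w).IsTree ↔ G.IsTree := by
  classical
  have := Fintype.ofFinite W
  simp only [isTree_iff_connected_and_sum_ncard_neighborSet, attachLeaf_connected_iff,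
    Fintype.sum_option, neighborSet_attachLeaf_none, Set.ncard_singleton, Fintype.card_option,
    ncard_neighborSet_attachLeaf_some, Finset.sum_add_distrib, Finset.sum_ite_eq',
    Finset.mem_univ, if_true]
  refine and_congr_right fun _ ↦ ?_
  omega

lemma attachLeaf_inj {G G' : SimpleGraph W} {w w' : W} :
    attachLeaf G w = attachLeaf G' w' ↔ G = G' ∧ w = w' := by
  refine ⟨fun h ↦ ⟨congrArg (SimpleGraph.comap some) h, ?_⟩, by rintro ⟨rfl, rfl⟩; rfl⟩
  simpa [neighborSet_attachLeaf_none] using congrArg (SimpleGraph.neighborSet · none) h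

lemma exists_attachLeaf_eq {H : SimpleGraph (Option W)} (hH : (H.neighborSet none).ncard = 1) :
    ∃ G w, attachLeaf G w = H := by
  obtain ⟨u, hu⟩ := Set.ncard_eq_one.1 hH
  have hadj : ∀ x, H.Adj none x ↔ x = u := Set.ext_iff.1 hu
  obtain _ | w := u
  · exact absurd ((hadj none).2 rfl) (H.loopless.irrefl _)
  refine ⟨H.comap some, w, ?_⟩
  ext (_ | x) (_ | y)
  · simp
  · simp [attachLeaf, hadj]
  · simp [attachLeaf, H.adj_comm (some x), hadj]
  · rfl

lemma attachLeaf_mem_treesWithDegrees [DecidableEq W] [Finite W] {D : Option W → Set ℕ}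
    (hD : D none = {1}) {G : SimpleGraph W} {w : W} :
    attachLeaf G w ∈ treesWithDegrees D ↔
      G ∈ treesWithDegrees (update (D ∘ some) w ((· + 1) ⁻¹' D (some w))) := by
  rw [mem_treesWithDegrees_update, treesWithDegrees, Set.mem_ofPred_eq, attachLeaf_isTree_iff,
    Option.forall, neighborSet_attachLeaf_none, hD, Set.ncard_singleton]
  simp only [ncard_neighborSet_attachLeaf_some, Set.mem_singleton_iff, true_and]
  refine and_congr_right fun _ ↦ ⟨fun h ↦ ⟨?_, fun x hx ↦ ?_⟩, fun ⟨hw, h⟩ x ↦ ?_⟩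
  · simpa using h w
  · simpa [hx] using h x
  · obtain rfl | hx := eq_or_ne x w
    · simpa using hw
    · simpa [hx] using h x hx

theorem ncard_treesWithDegrees_option_of_leaf [DecidableEq W] [Fintype W] {D : Option W → Set ℕ}
    (hD : D none = {1}) :
    (treesWithDegrees D).ncard =
      ∑ w, (treesWithDegrees (update (D ∘ some) w ((· + 1) ⁻¹' D (some w)))).ncard := by
  simp only [← Nat.card_coe_set_eq]
  rw [← Nat.card_sigma]
  refine (Nat.card_eq_of_bijective
    (fun p ↦ ⟨attachLeaf p.2 p.1, (attachLeaf_mem_treesWithDegrees hD).2 p.2.2⟩) ⟨?_, ?_⟩).symm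
  · rintro ⟨w, G, hG⟩ ⟨w', G', hG'⟩ h
    obtain ⟨rfl, rfl⟩ := attachLeaf_inj.1 (Subtype.ext_iff.1 h)
    rfl
  · rintro ⟨H, hH⟩
    obtain ⟨G, w, rfl⟩ := exists_attachLeaf_eq (by simpa [hD] using hH.2 none)
    exact ⟨⟨w, G, (attachLeaf_mem_treesWithDegrees hD).1 hH⟩, rfl⟩

end AttachLeaf

section SubdivideEdge

variable {W : Type*}

/-- The graph `G` with the pair `e` removed from its edges and a new vertex `none` joined to the
members of `e`; when `e` is an edge of `G`, this subdivides `e`. -/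
def subdivideEdge (G : SimpleGraph W) (e : Sym2 W) : SimpleGraph (Option W) where
  Adj
    | none, none => False
    | none, some y => y ∈ e
    | some x, none => x ∈ e
    | some x, some y => (G.deleteEdges {e}).Adj x y
  symm := ⟨by rintro (_ | x) (_ | y) h <;> simp_all [G.adj_comm, Sym2.eq_swap]⟩
  loopless := ⟨by rintro (_ | x) <;> simp⟩

lemma neighborSet_subdivideEdge_none (G : SimpleGraph W) (e : Sym2 W) :
    (subdivideEdge G e).neighborSet none = some '' {x | x ∈ e} := by
  ext (_ | x) <;> simp [subdivideEdge]

lemma ncard_neighborSet_subdivideEdge_none {G : SimpleGraph W} {e : Sym2 W} (he : e ∈ G.edgeSet) :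
    ((subdivideEdge G e).neighborSet none).ncard = 2 := by
  rw [neighborSet_subdivideEdge_none, Set.ncard_image_of_injective _ (Option.some_injective _)]
  induction e with | _ a b
  rw [← Set.ncard_pair (SimpleGraph.Adj.ne he)]
  congr 1
  ext x
  simp

lemma ncard_neighborSet_subdivideEdge_some {G : SimpleGraph W} {e : Sym2 W} (he : e ∈ G.edgeSet)
    (x : W) : ((subdivideEdge G e).neighborSet (some x)).ncard = (G.neighborSet x).ncard := by
  classical
  have himage : (subdivideEdge G e).neighborSet (some x) =
      (fun y ↦ if s(x, y) = e then none else some y) '' G.neighborSet x := by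
    ext (_ | y)
    · refine ⟨?_, ?_⟩
      · rintro ⟨y, rfl⟩
        exact ⟨y, he, by simp⟩
      · rintro ⟨y, -, h⟩
        obtain rfl : s(x, y) = e := by simpa using h
        exact Sym2.mem_mk_left _ _
    · simp [subdivideEdge]
  rw [himage, Set.InjOn.ncard_image]
  intro y _ z _ h
  simp only at h
  split_ifs at h with hy hz
  · exact Sym2.congr_right.1 (hy.trans hz.symm)
  · exact Option.some_injective _ h

lemma subdivideEdge_connected_iff {G : SimpleGraph W} {e : Sym2 W} (he : e ∈ G.edgeSet) :
    (subdivideEdge G e).Connected ↔ G.Connected := by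
  induction e with | _ a b
  have hnone : ∀ x ∈ s(a, b), (subdivideEdge G s(a, b)).Reachable none (some x) :=
    fun x hx ↦ SimpleGraph.Adj.reachable hx
  have hreach : ∀ x ∈ s(a, b), G.Reachable a x := by
    intro x hx
    obtain rfl | rfl := Sym2.mem_iff.1 hx
    · exact .rfl
    · exact SimpleGraph.Adj.reachable he
  constructor
  · refine connected_of_reachable_map (fun o ↦ o.getD a) ?_ fun x ↦ ⟨some x, .rfl⟩
    rintro (_ | x) (_ | y) h
    · exact .rfl
    · exact hreach y h
    · exact (hreach x h).symm
    · exact SimpleGraph.Adj.reachable h.1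
  · refine connected_of_reachable_map some (fun x y h ↦ ?_) ?_
    · by_cases hxy : s(x, y) = s(a, b)
      · rw [← hxy] at hnone ⊢
        exact (hnone x (Sym2.mem_mk_left _ _)).symm.trans (hnone y (Sym2.mem_mk_right _ _))
      · exact SimpleGraph.Adj.reachable
          (show (G.deleteEdges {s(a, b)}).Adj x y by simp [h, hxy])
    · rintro (_ | x)
      · exact ⟨a, hnone a (Sym2.mem_mk_left _ _)⟩
      · exact ⟨x, .rfl⟩

lemma subdivideEdge_isTree_iff [Finite W] {G : SimpleGraph W} {e : Sym2 W} (he : e ∈ G.edgeSet) :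
    (subdivideEdge G e).IsTree ↔ G.IsTree := by
  have := Fintype.ofFinite W
  simp only [isTree_iff_connected_and_sum_ncard_neighborSet, subdivideEdge_connected_iff he,
    Fintype.sum_option, Fintype.card_option, ncard_neighborSet_subdivideEdge_none he,
    ncard_neighborSet_subdivideEdge_some he]
  refine and_congr_right fun _ ↦ ?_
  omega

lemma subdivideEdge_inj {G G' : SimpleGraph W} {e e' : Sym2 W} (he : e ∈ G.edgeSet)
    (he' : e' ∈ G'.edgeSet) : subdivideEdge G e = subdivideEdge G' e' ↔ G = G' ∧ e = e' := by
  refine ⟨fun h ↦ ?_, by rintro ⟨rfl, rfl⟩; rfl⟩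
  obtain rfl : e = e' := Sym2.ext fun x ↦ by
    simpa [neighborSet_subdivideEdge_none] using
      Set.ext_iff.1 (congrArg (SimpleGraph.neighborSet · none) h) (some x)
  refine ⟨SimpleGraph.edgeSet_injective ?_, rfl⟩
  have hdel : G.deleteEdges {e} = G'.deleteEdges {e} := congrArg (SimpleGraph.comap some) h
  have hsdiff : G.edgeSet \ {e} = G'.edgeSet \ {e} := by
    simpa only [SimpleGraph.edgeSet_deleteEdges] using congrArg SimpleGraph.edgeSet hdel
  rw [← Set.insert_sdiff_self_of_mem he, hsdiff, Set.insert_sdiff_self_of_mem he']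

/-- Acyclicity rules out that the two neighbors of `none` are already adjacent. -/
lemma exists_subdivideEdge_eq {H : SimpleGraph (Option W)} (hH : H.IsAcyclic)
    (hdeg : (H.neighborSet none).ncard = 2) : ∃ G, ∃ e ∈ G.edgeSet, subdivideEdge G e = H := by
  classical
  obtain ⟨u, v, huv, hpair⟩ := Set.ncard_eq_two.1 hdeg
  have hadj : ∀ x, H.Adj none x ↔ x = u ∨ x = v := Set.ext_iff.1 hpair
  obtain _ | a := u
  · exact absurd ((hadj none).2 (.inl rfl)) (H.loopless.irrefl _)
  obtain _ | b := v
  · exact absurd ((hadj none).2 (.inr rfl)) (H.loopless.irrefl _)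
  have hab : a ≠ b := fun h ↦ huv (congrArg some h)
  have hnot : ¬ H.Adj (some a) (some b) := fun h ↦
    hH.cliqueFree le_rfl {none, some a, some b}
      (SimpleGraph.is3Clique_triple_iff.2 ⟨(hadj _).2 (.inl rfl), (hadj _).2 (.inr rfl), h⟩)
  refine ⟨H.comap some ⊔ SimpleGraph.edge a b, s(a, b), by simp [hab], ?_⟩
  ext (_ | x) (_ | y)
  · simp
  · simp [subdivideEdge, hadj]
  · simp [subdivideEdge, H.adj_comm (some x), hadj]
  · have hxy : H.Adj (some x) (some y) → s(x, y) ≠ s(a, b) := by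
      rintro h hxy
      obtain ⟨rfl, rfl⟩ | ⟨rfl, rfl⟩ := Sym2.eq_iff.1 hxy
      exacts [hnot h, hnot h.symm]
    simpa [subdivideEdge] using hxy

lemma subdivideEdge_mem_treesWithDegrees [Finite W] {D : Option W → Set ℕ} (hD : D none = {2})
    {G : SimpleGraph W} {e : Sym2 W} (he : e ∈ G.edgeSet) :
    subdivideEdge G e ∈ treesWithDegrees D ↔ G ∈ treesWithDegrees (D ∘ some) := by
  simp [treesWithDegrees, subdivideEdge_isTree_iff he, Option.forall, hD,
    ncard_neighborSet_subdivideEdge_none he, ncard_neighborSet_subdivideEdge_some he]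

theorem ncard_treesWithDegrees_option_of_two [Finite W] {D : Option W → Set ℕ}
    (hD : D none = {2}) :
    (treesWithDegrees D).ncard = (treesWithDegrees (D ∘ some)).ncard * (Nat.card W - 1) := by
  have := Fintype.ofFinite (treesWithDegrees (D ∘ some))
  have hsigma : Nat.card (Σ G : treesWithDegrees (D ∘ some), G.1.edgeSet) =
      (treesWithDegrees (D ∘ some)).ncard * (Nat.card W - 1) := by
    have hedge : ∀ G : treesWithDegrees (D ∘ some), Nat.card G.1.edgeSet = Nat.card W - 1 :=
      fun G ↦ by have := (SimpleGraph.isTree_iff_connected_and_card.1 G.2.1).2; omega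
    rw [Nat.card_sigma, Finset.sum_congr rfl fun G _ ↦ hedge G,
      Finset.sum_const, Finset.card_univ, ← Nat.card_eq_fintype_card, Nat.card_coe_set_eq,
      smul_eq_mul]
  rw [← hsigma, ← Nat.card_coe_set_eq]
  refine (Nat.card_eq_of_bijective
    (fun p ↦ ⟨subdivideEdge p.1 p.2, (subdivideEdge_mem_treesWithDegrees hD p.2.2).2 p.1.2⟩)
    ⟨?_, ?_⟩).symm
  · rintro ⟨⟨G, hG⟩, e, he⟩ ⟨⟨G', hG'⟩, e', he'⟩ h
    obtain ⟨rfl, rfl⟩ := (subdivideEdge_inj he he').1 (Subtype.ext_iff.1 h)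
    rfl
  · rintro ⟨H, hH⟩
    obtain ⟨G, e, he, rfl⟩ := exists_subdivideEdge_eq hH.1.isAcyclic (by simpa [hD] using hH.2 none)
    exact ⟨⟨⟨G, (subdivideEdge_mem_treesWithDegrees hD he).1 hH⟩, e, he⟩, rfl⟩

end SubdivideEdge

/-- Moves the new element of `Option (α ⊕ β)` to the left summand. -/
def optionSumEquivLeft (α β : Type*) : Option (α ⊕ β) ≃ Option α ⊕ β where
  toFun
    | none => .inl none
    | some (.inl a) => .inl (some a)
    | some (.inr b) => .inr b
  invFun
    | .inl none => none
    | .inl (some a) => some (.inl a)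
    | .inr b => some (.inr b)
  left_inv := by rintro (_ | _ | _) <;> rfl
  right_inv := by rintro ((_ | _) | _) <;> rfl

/-- Moves the new element of `Option (α ⊕ β)` to the right summand. -/
def optionSumEquivRight (α β : Type*) : Option (α ⊕ β) ≃ α ⊕ Option β where
  toFun
    | none => .inr none
    | some (.inl a) => .inl a
    | some (.inr b) => .inr (some b)
  invFun
    | .inl a => some (.inl a)
    | .inr none => none
    | .inr (some b) => some (.inr b)
  left_inv := by rintro (_ | _ | _) <;> rfl
  right_inv := by rintro (_ | _ | _) <;> rfl

namespace LeafTree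

/-- The degrees allowed in a `LeafTree n k`: `1` at leaves and at least `3` at internal vertices. -/
def degrees (n k : ℕ) : Fin n ⊕ Fin k → Set ℕ :=
  Sum.elim (fun _ ↦ {1}) (fun _ ↦ Set.Ici 3)

lemma card_eq_ncard_treesWithDegrees (n k : ℕ) :
    Nat.card (LeafTree n k) = (treesWithDegrees (degrees n k)).ncard := by
  rw [← Nat.card_coe_set_eq]
  refine Nat.card_congr (Equiv.subtypeEquivRight fun G ↦ and_congr_right fun _ ↦ ?_)
  rw [Sum.forall]
  rfl

lemma card_succ_leaves (n k : ℕ) :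
    Nat.card (LeafTree (n + 1) k) =
      ∑ i, (treesWithDegrees (update (degrees n k) (.inl i) {0})).ncard +
        ∑ j, (treesWithDegrees (update (degrees n k) (.inr j) (Set.Ici 2))).ncard := by
  let e : Option (Fin n ⊕ Fin k) ≃ Fin (n + 1) ⊕ Fin k :=
    (optionSumEquivLeft _ _).trans ((finSuccEquiv n).symm.sumCongr (.refl _))
  have hrest : (degrees (n + 1) k ∘ e) ∘ some = degrees n k := by
    ext (_ | _) <;> rfl
  have hleaf : (· + 1) ⁻¹' ({1} : Set ℕ) = {0} := by ext; simp
  have hinternal : (· + 1) ⁻¹' Set.Ici 3 = Set.Ici 2 := by ext; simp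
  rw [card_eq_ncard_treesWithDegrees, ← ncard_treesWithDegrees_comp_equiv e,
    ncard_treesWithDegrees_option_of_leaf rfl, Fintype.sum_sum_type, hrest, ← hleaf, ← hinternal]
  rfl

lemma card_succ_leaves_of_two_le {n : ℕ} (hn : 2 ≤ n) (k : ℕ) :
    Nat.card (LeafTree (n + 1) k) =
      ∑ j, (treesWithDegrees (update (degrees n k) (.inr j) (Set.Ici 2))).ncard := by
  have : Nontrivial (Fin n) := Fin.nontrivial_iff_two_le.2 hn
  have : Nontrivial (Fin n ⊕ Fin k) := Sum.inl_injective.nontrivial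
  rw [card_succ_leaves, Finset.sum_eq_zero, zero_add]
  intro i _
  rw [treesWithDegrees_eq_empty_of_degree_zero (update_self ..), Set.ncard_empty]

lemma ncard_treesWithDegrees_update_internal_two (n k : ℕ) (j : Fin (k + 1)) :
    (treesWithDegrees (update (degrees n (k + 1)) (.inr j) {2})).ncard =
      Nat.card (LeafTree n k) * (n + k - 1) := by
  let e : Option (Fin n ⊕ Fin k) ≃ Fin n ⊕ Fin (k + 1) :=
    (optionSumEquivRight _ _).trans ((Equiv.refl _).sumCongr (finSuccEquiv' j).symm)
  have hnone : e none = .inr j := congrArg Sum.inr (finSuccEquiv'_symm_none j)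
  have hrest : (update (degrees n (k + 1)) (.inr j) {2} ∘ e) ∘ some = degrees n k := by
    rw [← hnone, update_comp_eq_of_injective _ e.injective, update_comp_eq_of_forall_ne]
    · ext (_ | _) <;> rfl
    · simp
  rw [← ncard_treesWithDegrees_comp_equiv e, ncard_treesWithDegrees_option_of_two (by simp [hnone]),
    hrest, card_eq_ncard_treesWithDegrees]
  simp

lemma ncard_treesWithDegrees_update_internal_Ici_two (n k : ℕ) (j : Fin (k + 1)) :
    (treesWithDegrees (update (degrees n (k + 1)) (.inr j) (Set.Ici 2))).ncard =
      Nat.card (LeafTree n (k + 1)) + Nat.card (LeafTree n k) * (n + k - 1) := by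
  have hsplit : Set.Ici 2 = degrees n (k + 1) (.inr j) ∪ {2} := by
    ext d
    simp only [degrees, Sum.elim_inr, Set.mem_union, Set.mem_Ici, Set.mem_singleton_iff]
    omega
  rw [hsplit, ncard_treesWithDegrees_update_union _ _ (by simp [degrees]), update_eq_self,
    ncard_treesWithDegrees_update_internal_two, card_eq_ncard_treesWithDegrees n (k + 1)]

theorem card_succ_succ {n : ℕ} (hn : 2 ≤ n) (k : ℕ) :
    Nat.card (LeafTree (n + 1) (k + 1)) =
      (k + 1) * (Nat.card (LeafTree n (k + 1)) + Nat.card (LeafTree n k) * (n + k - 1)) := by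
  simp [card_succ_leaves_of_two_le hn, ncard_treesWithDegrees_update_internal_Ici_two]

lemma card_succ_zero {n : ℕ} (hn : 2 ≤ n) : Nat.card (LeafTree (n + 1) 0) = 0 := by
  simp [card_succ_leaves_of_two_le hn]

lemma card_two_zero : Nat.card (LeafTree 2 0) = 1 := by
  let : Unique (Fin 1 ⊕ Fin 0) := (Equiv.sumEmpty (Fin 1) (Fin 0)).unique
  rw [card_succ_leaves 1 0, Fin.sum_univ_one, Fin.sum_univ_zero, add_zero]
  exact ncard_treesWithDegrees_of_unique (by
    rw [← Unique.eq_default (Sum.inl 0), update_self, Set.mem_singleton_iff])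

lemma card_eq_zero_of_lt {n k : ℕ} (h : n < k + 2) : Nat.card (LeafTree n k) = 0 := by
  refine Nat.card_eq_zero.2 (.inl ⟨fun ⟨G, hG, hleaf, hinternal⟩ ↦ ?_⟩)
  have hsum := ((isTree_iff_connected_and_sum_ncard_neighborSet G).1 hG).2
  have hle : ∑ _j : Fin k, 3 ≤ ∑ j : Fin k, (G.neighborSet (.inr j)).ncard :=
    Finset.sum_le_sum fun j _ ↦ hinternal j
  simp only [Fintype.sum_sum_type, hleaf, Finset.sum_const, Finset.card_univ, Fintype.card_fin,
    Fintype.card_sum, smul_eq_mul] at hsum hle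
  omega

/-- The number of trees with `n` labeled leaves and `k` unlabeled internal vertices of degree at
least `3`: each of them arises from `k!` internally labeled trees, since an automorphism fixing the
leaves is trivial. -/
noncomputable def unlabeledCount (n k : ℕ) : ℚ :=
  Nat.card (LeafTree n k) / k.factorial

lemma unlabeledCount_succ_zero {n : ℕ} (hn : 2 ≤ n) : unlabeledCount (n + 1) 0 = 0 := by
  simp [unlabeledCount, card_succ_zero hn]

lemma unlabeledCount_eq_zero_of_lt {n k : ℕ} (h : n < k + 2) : unlabeledCount n k = 0 := by
  simp [unlabeledCount, card_eq_zero_of_lt h]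

theorem unlabeledCount_succ_succ {n : ℕ} (hn : 2 ≤ n) (k : ℕ) :
    unlabeledCount (n + 1) (k + 1) =
      (k + 1) * unlabeledCount n (k + 1) + (n + k - 1) * unlabeledCount n k := by
  have hcast : ((n + k - 1 : ℕ) : ℚ) = n + k - 1 := by
    rw [Nat.cast_sub (by omega)]
    push_cast
    rfl
  simp only [unlabeledCount, card_succ_succ hn, Nat.factorial_succ, Nat.cast_mul, Nat.cast_add,
    hcast, Nat.cast_one]
  field_simp

/-- The number of trees with `n` labeled leaves and unlabeled internal vertices of degree at least
`3`, signed by the parity of the number of internal vertices. For `2 ≤ n` there are at most `n - 2`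
of them, so the range of summation is exhaustive. -/
noncomputable def signedCount (n : ℕ) : ℚ :=
  ∑ k ∈ Finset.range (n - 1), (-1) ^ k * unlabeledCount n k

lemma signedCount_two : signedCount 2 = 1 := by
  simp [signedCount, unlabeledCount, card_two_zero]

theorem signedCount_succ {n : ℕ} (hn : 2 ≤ n) :
    signedCount (n + 1) = -(n - 1) * signedCount n := by
  obtain ⟨m, rfl⟩ : ∃ m, n = m + 1 := ⟨n - 1, by omega⟩
  let f : ℕ → ℚ := fun k ↦ (-1) ^ k * k * unlabeledCount (m + 1) k
  have hterm : ∀ k, (-1) ^ (k + 1) * unlabeledCount (m + 1 + 1) (k + 1) =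
      f (k + 1) - f k + -m * ((-1) ^ k * unlabeledCount (m + 1) k) := by
    intro k
    simp only [f, unlabeledCount_succ_succ hn]
    push_cast
    ring
  have htelescope : ∑ k ∈ Finset.range m, (f (k + 1) - f k) = 0 := by
    rw [Finset.sum_range_sub]
    simp [f, unlabeledCount_eq_zero_of_lt (show m + 1 < m + 2 by omega)]
  calc signedCount (m + 1 + 1)
      = ∑ k ∈ Finset.range m, (-1) ^ (k + 1) * unlabeledCount (m + 1 + 1) (k + 1) := by
        rw [signedCount, Nat.add_sub_cancel, Finset.sum_range_succ', unlabeledCount_succ_zero hn]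
        simp
    _ = -m * signedCount (m + 1) := by
        simp only [hterm]
        rw [Finset.sum_add_distrib, htelescope, zero_add, ← Finset.mul_sum, signedCount,
          Nat.add_sub_cancel]
    _ = -((m + 1 : ℕ) - 1) * signedCount (m + 1) := by simp

end LeafTree

/-- For `n ≥ 3`, the signed count of leaf-labeled (unrooted) trees with `n` labeled
leaves and all internal vertices of degree at least 3, counted with sign
`(-1)^{number of internal vertices}`, equals `(-1)^n (n-2)!`. (Internal vertices are
unlabeled; since such a tree has no automorphisms fixing the leaves, this is accounted
for by dividing the internally-labeled count by `k!`.) -/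
theorem signed_count_trees (n : ℕ) (hn : 3 ≤ n) :
    ∑ k ∈ Finset.range (n - 1),
        ((-1 : ℚ)) ^ k * (Nat.card (LeafTree n k) : ℚ) / (k.factorial : ℚ) =
      ((-1 : ℚ)) ^ n * ((n - 2).factorial : ℚ) := by
  simp only [mul_div_assoc]
  change LeafTree.signedCount n = _
  replace hn : 2 ≤ n := by omega
  induction n, hn using Nat.le_induction with
  | base => simp [LeafTree.signedCount_two]
  | succ n hn ih =>
    obtain ⟨m, rfl⟩ : ∃ m, n = m + 2 := ⟨n - 2, by omega⟩
    rw [LeafTree.signedCount_succ hn, ih, show m + 2 + 1 - 2 = m + 1 by omega, Nat.add_sub_cancel,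
      Nat.factorial_succ]
    push_cast
    ring
end
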